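/- There exists an absolute constant C > 0 such that for all reals k ≥ 2 and τ ≥ 1 and all disjoint finite sets A and B with |A| ≥ |B| ≥ 2, there exists a bipartite graph H with vertex set A ∪ B and all edges between A and B, in which every vertex of B has at least one neighbour, having at most C · |B| · (k · log τ + τ · log k + log |B|) edges, such that for every subset A' ⊆ A with |A'| ≤ (1 − 1/k) · |A|, the number of vertices b ∈ B all of whose neighbours lie in A' is at most |A'| / τ. -/

import Mathlib

/-!
Let every `b ∈ B` choose `d` neighbours in `A` independently and uniformly, with repetition, and put
`N = |A|`. For `A' ⊆ A` of size `a`, the size of the shadow is binomial with success probability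
`(a / N) ^ d = exp (-y)`, where `y = d * log (N / a)`. If `d ≥ 40 (k log τ + τ log k)`, then the
threshold `s = a / τ` satisfies `|B| ≤ N = s * τ * (N / a) ≤ s * exp (y / 16)`, because
`log (N / a) ≥ 1 / k`; a Chernoff bound then shows that the shadow reaches size `s` with probability
at most `exp (-s * y / 4)`. This beats the entropy bound on the number of sets `A'` of size `a`
by a factor `4 ^ min a (N - a)`, so a union bound over all `A'` succeeds. Measuring everything in
units of `log (N / a)` is what makes a `log |B|` term in the degree superfluous.
-/

section BinomialTail

open Finset

variable {β Ω : Type*} [Fintype β] [Fintype Ω] [DecidableEq β] [DecidableEq Ω]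

lemma sum_pow_card_filter_mem {R : Type*} [CommRing R] (S : Finset Ω) (x : R) :
    ∑ g : β → Ω, x ^ #{b | g b ∈ S} =
      (Fintype.card Ω + (x - 1) * #S) ^ Fintype.card β := by
  have single : ∑ ω, (if ω ∈ S then x else 1) = Fintype.card Ω + (x - 1) * #S := by
    have split (ω : Ω) : (if ω ∈ S then x else 1) = 1 + (x - 1) * if ω ∈ S then 1 else 0 := by
      split_ifs <;> ring
    simp only [split, sum_add_distrib, ← mul_sum, sum_boole, filter_mem_eq_inter, univ_inter,
      sum_const, card_univ, nsmul_one]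
  calc ∑ g : β → Ω, x ^ #{b | g b ∈ S}
      = ∑ g : β → Ω, ∏ b, (if g b ∈ S then x else 1) := by simp [prod_ite]
    _ = ∏ _b : β, ∑ ω, (if ω ∈ S then x else 1) :=
        (Fintype.prod_sum fun _ ω => if ω ∈ S then x else 1).symm
    _ = _ := by rw [single, prod_const, card_univ]

lemma card_le_card_filter_mem_mul_exp_le (S : Finset Ω) {θ : ℝ} (hθ : 0 ≤ θ) (s : ℝ) :
    #{g : β → Ω | s ≤ #{b | g b ∈ S}} * Real.exp (θ * s) ≤
      (Fintype.card Ω + (Real.exp θ - 1) * #S) ^ Fintype.card β := by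
  rw [← sum_pow_card_filter_mem, ← nsmul_eq_mul, ← sum_const]
  refine (sum_le_sum fun g hg => ?_).trans
    (sum_le_sum_of_subset_of_nonneg (subset_univ _) fun _ _ _ => by positivity)
  rw [← Real.exp_nat_mul, mul_comm θ]
  gcongr
  simpa using hg

/- The argument of the logarithm is the moment generating function `1 + (exp θ - 1) * exp (-y)` of
a Bernoulli variable at `θ = y / 2 + log 2`: half the optimal tilt for large `y`, but bounded below
as `y → 0`, where a multiple of `y` would gain nothing to first order. -/
lemma exp_mul_log_one_add_le {y : ℝ} (hy : 0 ≤ y) :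
    Real.exp (y / 16) * Real.log (1 + (2 * Real.exp (y / 2) - 1) * Real.exp (-y)) ≤
      Real.log 2 + y / 4 := by
  have hlog2 : Real.log 2 < 1 := Real.log_two_lt_d9.trans (by norm_num)
  have hlog2_pos : 0 < Real.log 2 := Real.log_pos one_lt_two
  set t := Real.exp (-(y / 2)) with ht
  have ht_sq : Real.exp (-y) = t * t := by rw [ht, ← Real.exp_add]; ring_nf
  have ht_mul : Real.exp (y / 2) * t = 1 := by rw [ht, ← Real.exp_add]; simp
  have ht_pos : 0 < t := Real.exp_pos _
  have ht_le : t ≤ 1 := Real.exp_le_one_iff.2 (by linarith)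
  have hz : 1 + (2 * Real.exp (y / 2) - 1) * Real.exp (-y) = 1 + (2 * t - t ^ 2) := by
    rw [ht_sq]; linear_combination 2 * t * ht_mul
  have hz_pos : 0 < 1 + (2 * t - t ^ 2) := by nlinarith
  rw [hz]
  rcases le_total y 4 with hy4 | hy4
  · have hlog : Real.log (1 + (2 * t - t ^ 2)) ≤ Real.log 2 :=
      Real.log_le_log hz_pos (by nlinarith [sq_nonneg (1 - t)])
    have hexp : Real.exp (y / 16) ≤ 1 + y / 4 := by
      refine (Real.exp_bound_div_one_sub_of_interval (by positivity) (by linarith)).trans ?_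
      rw [div_le_iff₀ (by linarith)]
      nlinarith
    calc Real.exp (y / 16) * Real.log (1 + (2 * t - t ^ 2))
        ≤ (1 + y / 4) * Real.log 2 :=
          mul_le_mul hexp hlog (Real.log_nonneg (by nlinarith)) (by positivity)
      _ ≤ Real.log 2 + y / 4 := by nlinarith
  · have hlog : Real.log (1 + (2 * t - t ^ 2)) ≤ 2 * t := by
      nlinarith [Real.log_le_sub_one_of_pos hz_pos]
    have hexp : Real.exp (y / 16) * t ≤ 1 / 2 := by
      calc Real.exp (y / 16) * t = Real.exp (y / 16 + -(y / 2)) := by rw [ht, ← Real.exp_add]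
        _ ≤ Real.exp (-Real.log 2) := Real.exp_le_exp.2 (by linarith)
        _ = 1 / 2 := by rw [Real.exp_neg, Real.exp_log two_pos, one_div]
    calc Real.exp (y / 16) * Real.log (1 + (2 * t - t ^ 2))
        ≤ Real.exp (y / 16) * (2 * t) := by gcongr
      _ ≤ 1 := by linarith
      _ ≤ Real.log 2 + y / 4 := by linarith

lemma one_add_mul_exp_pow_le_exp {n : ℕ} {y s : ℝ} (hy : 0 ≤ y)
    (hs : n ≤ s * Real.exp (y / 16)) :
    (1 + (2 * Real.exp (y / 2) - 1) * Real.exp (-y)) ^ n ≤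
      Real.exp (s * (Real.log 2 + y / 4)) := by
  have hs_nonneg : 0 ≤ s :=
    nonneg_of_mul_nonneg_left ((Nat.cast_nonneg _).trans hs) (Real.exp_pos _)
  have htilt : 1 ≤ 2 * Real.exp (y / 2) := by
    linarith [Real.one_le_exp (show 0 ≤ y / 2 by positivity)]
  set z := 1 + (2 * Real.exp (y / 2) - 1) * Real.exp (-y)
  have hz : 1 ≤ z := le_add_of_nonneg_right (mul_nonneg (sub_nonneg.2 htilt) (Real.exp_pos _).le)
  rw [← Real.exp_log (zero_lt_one.trans_le hz), ← Real.exp_nat_mul, Real.exp_le_exp]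
  calc n * Real.log z ≤ s * Real.exp (y / 16) * Real.log z :=
        mul_le_mul_of_nonneg_right hs (Real.log_nonneg hz)
    _ = s * (Real.exp (y / 16) * Real.log z) := mul_assoc _ _ _
    _ ≤ s * (Real.log 2 + y / 4) :=
        mul_le_mul_of_nonneg_left (exp_mul_log_one_add_le hy) hs_nonneg

lemma card_le_card_filter_mem_le_exp (S : Finset Ω) {y s : ℝ} (hy : 0 ≤ y)
    (hS : #S ≤ Real.exp (-y) * Fintype.card Ω) (hs : Fintype.card β ≤ s * Real.exp (y / 16)) :
    #{g : β → Ω | s ≤ #{b | g b ∈ S}} ≤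
      Real.exp (-(s * y / 4)) * Fintype.card (β → Ω) := by
  have htilt : 0 ≤ 2 * Real.exp (y / 2) - 1 := by
    linarith [Real.one_le_exp (show 0 ≤ y / 2 by positivity)]
  set z := 1 + (2 * Real.exp (y / 2) - 1) * Real.exp (-y)
  have hmoment : Fintype.card Ω + (2 * Real.exp (y / 2) - 1) * #S ≤ z * Fintype.card Ω := by
    linarith [mul_le_mul_of_nonneg_left hS htilt]
  have markov := card_le_card_filter_mem_mul_exp_le (β := β) S
    (add_nonneg (by positivity : 0 ≤ y / 2) (Real.log_nonneg one_le_two)) s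
  have hθ : Real.exp (y / 2 + Real.log 2) = 2 * Real.exp (y / 2) := by
    rw [Real.exp_add, Real.exp_log two_pos, mul_comm]
  rw [← le_div_iff₀ (Real.exp_pos _), hθ] at markov
  calc (#{g : β → Ω | s ≤ #{b | g b ∈ S}} : ℝ)
      ≤ (z * Fintype.card Ω) ^ Fintype.card β / Real.exp ((y / 2 + Real.log 2) * s) :=
        markov.trans (by gcongr)
    _ ≤ Real.exp (s * (Real.log 2 + y / 4)) * (Fintype.card Ω : ℝ) ^ Fintype.card β /
          Real.exp ((y / 2 + Real.log 2) * s) := by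
        rw [mul_pow]
        gcongr
        exact one_add_mul_exp_pow_le_exp hy hs
    _ = Real.exp (-(s * y / 4)) * Fintype.card (β → Ω) := by
        rw [mul_div_right_comm, ← Real.exp_sub, Fintype.card_fun, Nat.cast_pow]
        ring_nf

end BinomialTail

section SubsetCount

open Finset

lemma choose_le_exp_entropy {a m : ℕ} (ha : 0 < a) (hm : 0 < m) :
    ((a + m).choose a : ℝ) ≤
      Real.exp (a * Real.log ((a + m) / a) + m * Real.log ((a + m) / m)) := by
  have hpow {c : ℕ} (hc : 0 < c) :
      (c / (a + m) : ℝ) ^ c = Real.exp (-(c * Real.log ((a + m) / c))) := by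
    rw [← mul_neg, ← Real.log_inv, inv_div, Real.exp_nat_mul, Real.exp_log (by positivity)]
  have hterm : (a / (a + m) : ℝ) ^ a * (m / (a + m) : ℝ) ^ m * (a + m).choose a ≤ 1 := by
    have h := single_le_sum (s := range (a + m + 1)) (a := a)
      (f := fun i => (a / (a + m) : ℝ) ^ i * (m / (a + m) : ℝ) ^ (a + m - i) * (a + m).choose i)
      (fun _ _ => by positivity) (by simp)
    rwa [← add_pow, ← add_div, div_self (by positivity), one_pow, Nat.add_sub_cancel_left] at h
  rwa [hpow ha, hpow hm, ← Real.exp_add, ← neg_add, Real.exp_neg,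
    inv_mul_le_one₀ (Real.exp_pos _)] at hterm

lemma mul_log_add_div_le {x y : ℝ} (hx : 0 < x) (hy : 0 < y) :
    x * Real.log ((x + y) / x) ≤ y := by
  calc x * Real.log ((x + y) / x) ≤ x * ((x + y) / x - 1) :=
        mul_le_mul_of_nonneg_left (Real.log_le_sub_one_of_pos (by positivity)) hx.le
    _ = y := by field_simp; ring

lemma entropy_add_le {k x y : ℝ} (hk : 2 ≤ k) (hx : 0 < x) (hy : 0 < y) (hxy : x + y ≤ k * y) :
    x * Real.log ((x + y) / x) + y * Real.log ((x + y) / y) + min x y * Real.log 4 ≤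
      10 * Real.log k * (x * Real.log ((x + y) / x)) := by
  have hlog2_gt := Real.log_two_gt_d9
  have hlog2_lt := Real.log_two_lt_d9
  have hlog4 : Real.log 4 = 2 * Real.log 2 := by
    rw [← Real.log_rpow two_pos]; norm_num
  have hlogk : Real.log 2 ≤ Real.log k := Real.log_le_log two_pos hk
  have hx_log := mul_log_add_div_le hx hy
  have hy_log : y * Real.log ((x + y) / y) ≤ x := add_comm x y ▸ mul_log_add_div_le hy hx
  rcases le_total x y with h | h
  · have hL : x * Real.log 2 ≤ x * Real.log ((x + y) / x) := by
      gcongr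
      rw [le_div_iff₀ hx]
      linarith
    rw [min_eq_left h, hlog4]
    nlinarith [mul_le_mul_of_nonneg_right (show 6.93 ≤ 10 * Real.log k by linarith)
      ((by positivity : 0 ≤ x * Real.log 2).trans hL)]
  · have hL : y / 2 ≤ x * Real.log ((x + y) / x) := by
      calc y / 2 ≤ x * (1 - ((x + y) / x)⁻¹) := by
            rw [inv_div, one_sub_div (by positivity), add_sub_cancel_left, mul_div_assoc',
              div_le_div_iff₀ two_pos (by positivity)]
            nlinarith
        _ ≤ _ := mul_le_mul_of_nonneg_left
            (Real.one_sub_inv_le_log_of_pos (by positivity)) hx.le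
    have hy_log' : y * Real.log ((x + y) / y) ≤ y * Real.log k := by
      gcongr
      rwa [div_le_iff₀ hy]
    rw [min_eq_right h, hlog4]
    nlinarith [mul_le_mul_of_nonneg_left hL (by linarith : 0 ≤ Real.log k)]

lemma lt_of_le_one_sub_one_div_mul {k : ℝ} {a N : ℕ} (hk : 0 < k) (ha : 0 < a)
    (hak : a ≤ (1 - 1 / k) * N) : a < N := by
  have ha' : (0 : ℝ) < a := Nat.cast_pos.2 ha
  rcases N.eq_zero_or_pos with rfl | hN
  · rw [Nat.cast_zero, mul_zero] at hak
    exact absurd hak ha'.not_ge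
  · exact Nat.cast_lt.1 (hak.trans_lt (mul_lt_of_lt_one_left (Nat.cast_pos.2 hN)
      (sub_lt_self 1 (one_div_pos.2 hk))))

lemma choose_mul_exp_le {k : ℝ} {a N : ℕ} (hk : 2 ≤ k) (ha : 0 < a)
    (hak : a ≤ (1 - 1 / k) * N) :
    N.choose a * Real.exp (-(10 * Real.log k * (a * Real.log (N / a)))) ≤
      (1 / 4) ^ a + (1 / 4) ^ (N - a) := by
  have haN : a < N := lt_of_le_one_sub_one_div_mul (by linarith) ha hak
  obtain ⟨m, rfl⟩ := Nat.exists_eq_add_of_le haN.le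
  have hm : 0 < m := by lia
  have hkm : (a + m : ℝ) ≤ k * m := by
    have hk_mul : k * ((1 - 1 / k) * (a + m)) = k * (a + m) - (a + m) := by field_simp
    push_cast at hak
    linarith [mul_le_mul_of_nonneg_left hak (by linarith : 0 ≤ k)]
  have entropy := entropy_add_le hk (Nat.cast_pos.2 ha) (Nat.cast_pos.2 hm) hkm
  rw [← Nat.cast_min] at entropy
  have hmin : Real.exp (-(min a m * Real.log 4)) = (1 / 4) ^ min a m := by
    rw [← mul_neg, ← Real.log_inv, Real.exp_nat_mul, Real.exp_log (by norm_num),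
      one_div]
  push_cast
  calc ((a + m).choose a : ℝ) * Real.exp (-(10 * Real.log k * (a * Real.log ((a + m) / a))))
      ≤ Real.exp (-(min a m * Real.log 4)) := by
        refine (mul_le_mul_of_nonneg_right (choose_le_exp_entropy ha hm)
          (Real.exp_pos _).le).trans ?_
        rw [← Real.exp_add]
        exact Real.exp_le_exp.2 (by linarith)
    _ = (1 / 4) ^ min a m := hmin
    _ ≤ (1 / 4) ^ a + (1 / 4) ^ (a + m - a) := by
        rw [Nat.add_sub_cancel_left]
        rcases min_choice a m with h | h <;> rw [h] <;> simp

lemma sum_Ico_pow_add_pow_sub_lt_one (N : ℕ) :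
    ∑ a ∈ Ico 1 N, ((1 / 4 : ℝ) ^ a + (1 / 4) ^ (N - a)) < 1 := by
  have hgeom : ∑ a ∈ Ico 1 N, (1 / 4 : ℝ) ^ a ≤ (1 / 4) ^ 1 / (1 - 1 / 4) :=
    geom_sum_Ico_le_of_lt_one (by norm_num) (by norm_num)
  have hreflect := sum_Ico_reflect (fun a => (1 / 4 : ℝ) ^ a) 1 N.le_succ
  simp only [Nat.add_sub_cancel, Nat.add_sub_cancel_left] at hreflect
  rw [sum_add_distrib, hreflect]
  linarith

lemma sum_exp_entropy_lt_one {γ : Type*} [Fintype γ] {k : ℝ} (hk : 2 ≤ k) :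
    ∑ S : Finset γ with S.Nonempty ∧ #S ≤ (1 - 1 / k) * Fintype.card γ,
      Real.exp (-(10 * Real.log k * (#S * Real.log (Fintype.card γ / #S)))) < 1 := by
  set N := Fintype.card γ
  set small : ℕ → Prop := fun a => 0 < a ∧ a ≤ (1 - 1 / k) * N with hsmall
  set weight : ℕ → ℝ := fun a => Real.exp (-(10 * Real.log k * (a * Real.log (N / a))))
  have hsubset : {a ∈ range (N + 1) | small a} ⊆ Ico 1 N := by
    intro a ha
    obtain ⟨ha_pos, ha_le⟩ := (mem_filter.1 ha).2
    exact mem_Ico.2 ⟨ha_pos, lt_of_le_one_sub_one_div_mul (by linarith) ha_pos ha_le⟩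
  calc ∑ S : Finset γ with S.Nonempty ∧ #S ≤ (1 - 1 / k) * N, weight #S
      = ∑ S ∈ (univ : Finset γ).powerset, if small #S then weight #S else 0 := by
        simp only [powerset_univ, sum_filter, hsmall, card_pos]
    _ = ∑ a ∈ range (N + 1) with small a, N.choose a * weight a := by
        rw [sum_powerset_apply_card fun a => if small a then weight a else 0, sum_filter]
        simp only [card_univ, nsmul_eq_mul, mul_ite, mul_zero, N]
    _ ≤ ∑ a ∈ range (N + 1) with small a, ((1 / 4) ^ a + (1 / 4) ^ (N - a)) :=
        sum_le_sum fun a ha =>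
          have ⟨ha_pos, ha_le⟩ := (mem_filter.1 ha).2
          choose_mul_exp_le hk ha_pos ha_le
    _ ≤ ∑ a ∈ Ico 1 N, ((1 / 4) ^ a + (1 / 4) ^ (N - a)) :=
        sum_le_sum_of_subset_of_nonneg hsubset fun _ _ _ => by positivity
    _ < 1 := sum_Ico_pow_add_pow_sub_lt_one N

end SubsetCount

section Degree

lemma one_le_mul_log_div {k a N : ℝ} (hk : 0 < k) (ha : 0 < a) (hN : 0 < N)
    (hak : a ≤ (1 - 1 / k) * N) : 1 ≤ k * Real.log (N / a) := by
  rw [← div_le_iff₀' hk]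
  refine le_trans ?_ (Real.one_sub_inv_le_log_of_pos (div_pos hN ha))
  rwa [inv_div, le_sub_comm, div_le_iff₀ hN]

lemma log_add_mul_le_degree_mul {k τ d L : ℝ} (hτ : 1 ≤ τ) (hL : 0 ≤ L) (hkL : 1 ≤ k * L)
    (hd : 40 * (k * Real.log τ + τ * Real.log k) ≤ d) :
    40 * (Real.log τ + τ * Real.log k * L) ≤ d * L := by
  calc 40 * (Real.log τ + τ * Real.log k * L)
      ≤ 40 * (k * L * Real.log τ + τ * Real.log k * L) := by
        gcongr
        exact le_mul_of_one_le_left (Real.log_nonneg hτ) hkL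
    _ = 40 * (k * Real.log τ + τ * Real.log k) * L := by ring
    _ ≤ d * L := by gcongr

end Degree

section ChoiceShadow

open Finset

lemma card_piFinset_const_eq_exp_mul {γ ι : Type*} [Fintype γ] [Fintype ι] [DecidableEq ι]
    {S : Finset γ} (hS : S.Nonempty) :
    (#(Fintype.piFinset fun _ : ι => S) : ℝ) =
      Real.exp (-(Fintype.card ι * Real.log (Fintype.card γ / #S))) * Fintype.card (ι → γ) := by
  have hS_pos : (0 : ℝ) < #S := Nat.cast_pos.2 hS.card_pos
  have hγ_pos : (0 : ℝ) < Fintype.card γ := hS_pos.trans_le (Nat.cast_le.2 S.card_le_univ)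
  rw [← mul_neg, Real.exp_nat_mul, Real.exp_neg, Real.exp_log (by positivity), inv_div]
  simp [div_pow, hγ_pos.ne']

variable {β γ ι : Type*} [Fintype β] [Fintype ι] [DecidableEq γ]

/-- The shadow of `S` when `b` has the neighbours `g b i`, one for each `i` and possibly repeated:
the set of all `b` whose neighbours lie in `S`. -/
def choiceShadow (g : β → ι → γ) (S : Finset γ) : Finset β := {b | ∀ i, g b i ∈ S}

lemma mem_choiceShadow {g : β → ι → γ} {S : Finset γ} {b : β} :
    b ∈ choiceShadow g S ↔ ∀ i, g b i ∈ S := by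
  simp [choiceShadow]

lemma choiceShadow_empty [Nonempty ι] (g : β → ι → γ) : choiceShadow g ∅ = ∅ := by
  simp [choiceShadow]

variable [Fintype γ]

lemma card_filter_lt_card_choiceShadow_le [DecidableEq β] [DecidableEq ι] {k τ : ℝ}
    (hk : 2 ≤ k) (hτ : 1 ≤ τ) (hβγ : Fintype.card β ≤ Fintype.card γ)
    (hι : 40 * (k * Real.log τ + τ * Real.log k) ≤ Fintype.card ι)
    {S : Finset γ} (hS : S.Nonempty) (hSk : #S ≤ (1 - 1 / k) * Fintype.card γ) :
    #{g : β → ι → γ | #S / τ < #(choiceShadow g S)} ≤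
      Real.exp (-(10 * Real.log k * (#S * Real.log (Fintype.card γ / #S)))) *
        Fintype.card (β → ι → γ) := by
  have hS_pos : (0 : ℝ) < #S := Nat.cast_pos.2 hS.card_pos
  have hγ_pos : (0 : ℝ) < Fintype.card γ := hS_pos.trans_le (Nat.cast_le.2 S.card_le_univ)
  have hτ_pos : 0 < τ := by linarith
  have hlogτ : 0 ≤ Real.log τ := Real.log_nonneg hτ
  have hlogk : 0.69 ≤ Real.log k := by
    linarith [Real.log_two_gt_d9, Real.log_le_log two_pos hk]
  set L := Real.log (Fintype.card γ / #S)
  have hL_exp : Real.exp L = Fintype.card γ / #S := Real.exp_log (by positivity)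
  have hkL : 1 ≤ k * L := one_le_mul_log_div (by linarith) hS_pos hγ_pos hSk
  have hL_pos : 0 < L := pos_of_mul_pos_right (by linarith) (by linarith : 0 ≤ k)
  set y := Fintype.card ι * L
  have hdegree : 40 * (Real.log τ + τ * Real.log k * L) ≤ y :=
    log_add_mul_le_degree_mul hτ hL_pos.le hkL hι
  have hmean : Fintype.card β ≤ #S / τ * Real.exp (y / 16) := by
    have hexponent : Real.log τ + L ≤ y / 16 := by
      nlinarith [mul_le_mul hτ hlogk (by norm_num) hτ_pos.le]
    calc (Fintype.card β : ℝ) ≤ Fintype.card γ := Nat.cast_le.2 hβγ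
      _ = #S / τ * Real.exp (Real.log τ + L) := by
          rw [Real.exp_add, Real.exp_log hτ_pos, hL_exp]
          field_simp
      _ ≤ #S / τ * Real.exp (y / 16) := by gcongr
  have hexp : 10 * Real.log k * (#S * L) ≤ #S / τ * y / 4 := by
    calc 10 * Real.log k * (#S * L) = #S / τ * (40 * (τ * Real.log k * L)) / 4 := by
          field_simp
          ring
      _ ≤ #S / τ * y / 4 := by gcongr; linarith
  calc (#{g : β → ι → γ | #S / τ < #(choiceShadow g S)} : ℝ)
      ≤ #{g : β → ι → γ | #S / τ ≤ #{b | g b ∈ Fintype.piFinset fun _ : ι => S}} := by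
        gcongr with g
        simpa only [choiceShadow, Fintype.mem_piFinset] using le_of_lt
    _ ≤ Real.exp (-(#S / τ * y / 4)) * Fintype.card (β → ι → γ) :=
        card_le_card_filter_mem_le_exp _ (by positivity)
          (card_piFinset_const_eq_exp_mul hS).le hmean
    _ ≤ _ := by gcongr

theorem exists_forall_card_choiceShadow_le [Nonempty ι] {k τ : ℝ} (hk : 2 ≤ k) (hτ : 1 ≤ τ)
    (hβγ : Fintype.card β ≤ Fintype.card γ)
    (hι : 40 * (k * Real.log τ + τ * Real.log k) ≤ Fintype.card ι) :
    ∃ g : β → ι → γ, ∀ S : Finset γ, #S ≤ (1 - 1 / k) * Fintype.card γ →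
      #(choiceShadow g S) ≤ #S / τ := by
  classical
  set bad : Finset γ → Finset (β → ι → γ) := fun S =>
    {g | #S / τ < #(choiceShadow g S)}
  set small : Finset (Finset γ) :=
    {S | S.Nonempty ∧ #S ≤ (1 - 1 / k) * Fintype.card γ}
  have : Nonempty (β → ι → γ) := by
    rcases isEmpty_or_nonempty γ with _ | _
    · have : IsEmpty β := Fintype.card_eq_zero_iff.1 (by simpa using hβγ)
      infer_instance
    · infer_instance
  have hbad_lt : (∑ S ∈ small, #(bad S) : ℝ) < #(univ : Finset (β → ι → γ)) := by
    calc (∑ S ∈ small, #(bad S) : ℝ)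
        ≤ ∑ S ∈ small,
            Real.exp (-(10 * Real.log k * (#S * Real.log (Fintype.card γ / #S)))) *
              Fintype.card (β → ι → γ) :=
          sum_le_sum fun S hS =>
            have ⟨hS_nonempty, hSk⟩ := (mem_filter.1 hS).2
            card_filter_lt_card_choiceShadow_le hk hτ hβγ hι hS_nonempty hSk
      _ < Fintype.card (β → ι → γ) := by
          rw [← sum_mul]
          exact mul_lt_of_lt_one_left (Nat.cast_pos.2 Fintype.card_pos)
            (sum_exp_entropy_lt_one hk)
  obtain ⟨g, -, hg⟩ := exists_mem_notMem_of_card_lt_card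
    (card_biUnion_le.trans_lt (by exact_mod_cast hbad_lt) : #(small.biUnion bad) < _)
  refine ⟨g, fun S hSk => ?_⟩
  rcases S.eq_empty_or_nonempty with rfl | hS
  · simp [choiceShadow_empty]
  · by_contra! hlt
    exact hg (mem_biUnion.2 ⟨S, mem_filter.2 ⟨mem_univ S, hS, hSk⟩,
      mem_filter.2 ⟨mem_univ g, hlt⟩⟩)

end ChoiceShadow

section ChoiceGraph

open Finset

variable {α ι : Type*} {A B : Finset α}

/-- The bipartite graph in which each `b ∈ B` is joined to its chosen neighbours `g b i ∈ A`.
Typing `g` on the subtypes makes the bipartition automatic. -/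
def choiceGraph (g : B → ι → A) : SimpleGraph α :=
  SimpleGraph.fromRel fun x y => ∃ (b : B) (i : ι), x = b ∧ y = g b i

variable {g : B → ι → A}

lemma mem_of_choiceGraph_adj {x y : α} (h : (choiceGraph g).Adj x y) :
    (x ∈ A ∧ y ∈ B) ∨ (x ∈ B ∧ y ∈ A) := by
  rcases ((SimpleGraph.fromRel_adj _ x y).1 h).2 with ⟨b, i, rfl, rfl⟩ | ⟨b, i, rfl, rfl⟩
  · exact Or.inr ⟨b.2, (g b i).2⟩
  · exact Or.inl ⟨(g b i).2, b.2⟩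

lemma choiceGraph_adj (hAB : Disjoint A B) (b : B) (i : ι) :
    (choiceGraph g).Adj b (g b i) :=
  (SimpleGraph.fromRel_adj _ _ _).2
    ⟨(disjoint_left.1 hAB (g b i).2 <| · ▸ b.2), Or.inl ⟨b, i, rfl, rfl⟩⟩

lemma ncard_edgeSet_choiceGraph_le [Fintype ι] :
    (choiceGraph g).edgeSet.ncard ≤ #B * Fintype.card ι := by
  have hsubset : (choiceGraph g).edgeSet ⊆
      Set.range fun p : B × ι => s((p.1 : α), (g p.1 p.2 : α)) := by
    intro e
    induction e using Sym2.ind with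
    | _ x y =>
      intro (h : (choiceGraph g).Adj x y)
      rcases ((SimpleGraph.fromRel_adj _ x y).1 h).2 with ⟨b, i, rfl, rfl⟩ | ⟨b, i, rfl, rfl⟩
      · exact ⟨(b, i), rfl⟩
      · exact ⟨(b, i), Sym2.eq_swap⟩
  calc (choiceGraph g).edgeSet.ncard
      ≤ (Set.range fun p : B × ι => s((p.1 : α), (g p.1 p.2 : α))).ncard :=
        Set.ncard_le_ncard hsubset (Set.finite_range _)
    _ ≤ Nat.card (B × ι) := Finite.card_range_le _
    _ = #B * Fintype.card ι := by simp

lemma ncard_shadow_choiceGraph_le [Fintype ι] [DecidableEq α] (hAB : Disjoint A B)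
    (A' : Finset α) :
    {b | b ∈ B ∧ ∀ y, (choiceGraph g).Adj b y → y ∈ A'}.ncard ≤
      #(choiceShadow g (A'.subtype (· ∈ A))) := by
  rw [← card_map (Function.Embedding.subtype (· ∈ B)), ← Set.ncard_coe_finset]
  refine Set.ncard_le_ncard ?_ (finite_toSet _)
  rintro b ⟨hb, hbA'⟩
  refine mem_map.2 ⟨⟨b, hb⟩, mem_choiceShadow.2 fun i => mem_subtype.2 ?_, rfl⟩
  exact hbA' _ (choiceGraph_adj hAB ⟨b, hb⟩ i)

end ChoiceGraph

theorem shrinking_shadow_expander_exists_general {k τ : ℝ} (hk : 2 ≤ k) (hτ : 1 ≤ τ)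
    {α : Type*} {A B : Finset α} (hAB : Disjoint A B) (hBA : B.card ≤ A.card) :
    ∃ H : SimpleGraph α,
      (∀ x y, H.Adj x y → (x ∈ A ∧ y ∈ B) ∨ (x ∈ B ∧ y ∈ A)) ∧
      (∀ b ∈ B, ∃ a, H.Adj b a) ∧
      (H.edgeSet.ncard : ℝ) ≤ 42 * B.card * (k * Real.log τ + τ * Real.log k) ∧
      ∀ A' : Finset α, A' ⊆ A → (A'.card : ℝ) ≤ (1 - 1 / k) * A.card →
        ({b | b ∈ B ∧ ∀ y, H.Adj b y → y ∈ A'}.ncard : ℝ) ≤ A'.card / τ := by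
  classical
  set D := k * Real.log τ + τ * Real.log k
  have hD : 1 / 2 ≤ D := by
    have hkτ : 0 ≤ k * Real.log τ := mul_nonneg (by linarith) (Real.log_nonneg hτ)
    have hlogk : 1 / 2 ≤ Real.log k := by
      linarith [Real.log_two_gt_d9, Real.log_le_log two_pos hk]
    linarith [le_mul_of_one_le_left (by linarith : 0 ≤ Real.log k) hτ]
  set d := ⌈40 * D⌉₊
  have hd_pos : 0 < d := Nat.ceil_pos.2 (by linarith)
  have : NeZero d := ⟨hd_pos.ne'⟩
  have hd_le : (d : ℝ) ≤ 42 * D := by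
    linarith [Nat.ceil_lt_add_one (by linarith : 0 ≤ 40 * D)]
  obtain ⟨g, hg⟩ := exists_forall_card_choiceShadow_le (β := B) (γ := A) (ι := Fin d) hk hτ
    (by simpa using hBA) (by simpa [D] using Nat.le_ceil (40 * D))
  refine ⟨choiceGraph g, fun x y => mem_of_choiceGraph_adj,
    fun b hb => ⟨_, choiceGraph_adj hAB ⟨b, hb⟩ 0⟩, ?_, fun A' hA' hcard => ?_⟩
  · calc ((choiceGraph g).edgeSet.ncard : ℝ) ≤ B.card * d := by
          exact_mod_cast (ncard_edgeSet_choiceGraph_le (g := g)).trans_eq (by simp)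
      _ ≤ B.card * (42 * D) := by gcongr
      _ = 42 * B.card * D := by ring
  · have hcard_subtype : (A'.subtype (· ∈ A)).card = A'.card := by
      rw [Finset.card_subtype, Finset.filter_true_of_mem hA']
    have hshadow := hg (A'.subtype (· ∈ A)) (by simpa [hcard_subtype] using hcard)
    rw [hcard_subtype] at hshadow
    exact (Nat.cast_le.2 (ncard_shadow_choiceGraph_le hAB A')).trans hshadow

/-- There is an absolute constant `C > 0` such that for all `k ≥ 2`, `τ ≥ 1` and all
disjoint finite sets `A`, `B` with `|A| ≥ |B| ≥ 2`, there is a bipartite graph `H`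
between `A` and `B`, in which every vertex of `B` has a neighbour, with at most
`C·|B|·(k·log τ + τ·log k + log |B|)` edges, such that for every `A' ⊆ A` with
`|A'| ≤ (1 - 1/k)·|A|`, the shadow `{b ∈ B : N_H(b) ⊆ A'}` has size at most `|A'|/τ`. -/
theorem shrinking_shadow_expander_exists :
    ∃ C : ℝ, 0 < C ∧
      ∀ k τ : ℝ, 2 ≤ k → 1 ≤ τ →
      ∀ (α : Type) (A B : Finset α), Disjoint A B → B.card ≤ A.card → 2 ≤ B.card →
      ∃ H : SimpleGraph α,
        (∀ x y, H.Adj x y → (x ∈ A ∧ y ∈ B) ∨ (x ∈ B ∧ y ∈ A)) ∧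
        (∀ b ∈ B, ∃ a, H.Adj b a) ∧
        (H.edgeSet.ncard : ℝ) ≤
          C * B.card * (k * Real.log τ + τ * Real.log k + Real.log B.card) ∧
        ∀ A' : Finset α, A' ⊆ A → (A'.card : ℝ) ≤ (1 - 1 / k) * A.card →
          ({b | b ∈ B ∧ ∀ y, H.Adj b y → y ∈ A'}.ncard : ℝ) ≤ A'.card / τ :=
  ⟨42, by norm_num, fun _ _ hk hτ _ A B hAB hBA _ => by
    obtain ⟨H, hbipartite, hneighbour, hedges, hshadow⟩ :=
      shrinking_shadow_expander_exists_general hk hτ hAB hBA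
    refine ⟨H, hbipartite, hneighbour, hedges.trans ?_, hshadow⟩
    exact mul_le_mul_of_nonneg_left (le_add_of_nonneg_right (Real.log_natCast_nonneg _))
      (by positivity)⟩
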